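/- arXiv:1410.5339 — 2 statements merged into one kernel-verified Lean document; each statement's English description precedes it below -/
import Mathlib

section
/- Let E be a uniformly convex real Banach space satisfying Opial's condition, C a nonempty closed convex subset of E, and T a nonspreading self-mapping of C with nonempty fixed point set F(T). Let {λₙ} ⊆ [0,1] and {γₙ} ⊆ [a,1] with 0 < a ≤ 1, suppose liminf λₙ(1−λₙ) > 0, and define the Ishikawa sequence by x₁ = x ∈ C, yₙ = (1−λₙ)xₙ + λₙTxₙ, x_{n+1} = (1−γₙ)xₙ + γₙTyₙ. Then {xₙ} converges weakly to some point x₀ ∈ F(T). -/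
open Filter Topology

/-!
A fixed point `p` of a nonspreading map is attractive: `‖T z - p‖ ≤ ‖z - p‖`. Hence `‖xₙ - p‖`
decreases along the Ishikawa iteration, and the defect `‖xₙ - p‖ - ‖yₙ - p‖` tends to `0`. By
uniform convexity this defect controls `λₙ (1 - λₙ)` as long as `‖xₙ - T xₙ‖` stays away from `0`,
so `‖xₙ - T xₙ‖ → 0`. The nonspreading inequality gives `‖z - T u‖ ≤ ‖z - u‖ + 5 ‖z - T z‖`, so
under Opial's condition every weak subsequential limit of `xₙ` is a fixed point. Such limits exist
because bounded closed convex sets are weakly sequentially compact, and Opial's condition forces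
them to coincide.
-/

open Bornology Metric Set TopologicalSpace

section UniformConvexity

variable {E : Type*} [SeminormedAddCommGroup E] [NormedSpace ℝ E] [UniformConvexSpace E] {ε : ℝ}

theorem exists_pos_forall_norm_add_le_two_mul_sub (hε : 0 < ε) (M : ℝ) :
    ∃ δ > 0, ∀ R ≤ M, ∀ u v : E, ‖u‖ ≤ R → ‖v‖ ≤ R → ε ≤ ‖u - v‖ → ‖u + v‖ ≤ 2 * R - δ := by
  have hM : 0 < max M 1 := lt_max_of_lt_right one_pos
  obtain ⟨δ, hδ, h⟩ := exists_forall_closed_ball_dist_add_le_two_sub E (div_pos hε hM)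
  refine ⟨ε / 2 * δ, by positivity, fun R hR u v hu hv huv => ?_⟩
  have hεR : ε ≤ 2 * R := by linarith [norm_sub_le u v]
  have hR0 : 0 < R := by linarith
  have hscale (z : E) : ‖R⁻¹ • z‖ = ‖z‖ / R := by
    rw [norm_smul_of_nonneg (inv_nonneg.2 hR0.le), div_eq_inv_mul]
  have hunit : ‖R⁻¹ • u + R⁻¹ • v‖ ≤ 2 - δ := by
    refine h ?_ ?_ ?_
    · rwa [hscale, div_le_one hR0]
    · rwa [hscale, div_le_one hR0]
    · rw [← smul_sub, hscale]
      exact div_le_div₀ (norm_nonneg _) huv hR0 (hR.trans (le_max_left _ _))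
  rw [← smul_add, hscale, div_le_iff₀ hR0] at hunit
  calc
    ‖u + v‖ ≤ (2 - δ) * R := hunit
    _ = 2 * R - R * δ := by ring
    _ ≤ 2 * R - ε / 2 * δ := by gcongr; linarith

theorem exists_pos_forall_norm_convexCombination_le (hε : 0 < ε) (M : ℝ) :
    ∃ δ > 0, ∀ R ≤ M, ∀ u v : E, ‖u‖ ≤ R → ‖v‖ ≤ R → ε ≤ ‖u - v‖ →
      ∀ t ∈ Icc (0 : ℝ) 1, ‖(1 - t) • u + t • v‖ ≤ R - t * (1 - t) * δ := by
  obtain ⟨δ, hδ, h⟩ := exists_pos_forall_norm_add_le_two_mul_sub (E := E) hε M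
  refine ⟨δ, hδ, fun R hR u v hu hv huv t ⟨ht0, ht1⟩ => ?_⟩
  have hsum : ‖u + v‖ ≤ 2 * R - δ := h R hR u v hu hv huv
  have hhalf {s : ℝ} {w : E} (hs0 : 0 ≤ s) (hs : s ≤ 1 / 2) (hw : ‖w‖ ≤ R) :
      ‖s • (u + v) + (1 - 2 * s) • w‖ ≤ R - s * δ := by
    have hs' : 0 ≤ 1 - 2 * s := by linarith
    calc
      _ ≤ s * ‖u + v‖ + (1 - 2 * s) * ‖w‖ := by
        grw [norm_add_le, norm_smul_of_nonneg hs0, norm_smul_of_nonneg hs']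
      _ ≤ s * (2 * R - δ) + (1 - 2 * s) * R := by gcongr
      _ = R - s * δ := by ring
  rcases le_total t (1 / 2) with htle | htge
  · calc
      ‖(1 - t) • u + t • v‖ = ‖t • (u + v) + (1 - 2 * t) • u‖ := by congr 1; module
      _ ≤ R - t * δ := hhalf ht0 htle hu
      _ ≤ R - t * (1 - t) * δ := by gcongr; nlinarith
  · calc
      ‖(1 - t) • u + t • v‖ = ‖(1 - t) • (u + v) + (1 - 2 * (1 - t)) • v‖ := by congr 1; module
      _ ≤ R - (1 - t) * δ := hhalf (by linarith) (by linarith) hv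
      _ ≤ R - t * (1 - t) * δ := by gcongr; nlinarith

theorem exists_pos_forall_convex_dist_lt_of_infDist (hε : 0 < ε) (d : ℝ) :
    ∃ δ > 0, ∀ K : Set E, Convex ℝ K → d - δ < infDist 0 K →
      ∀ z ∈ K ∩ closedBall 0 (d + δ), ∀ w ∈ K ∩ closedBall 0 (d + δ), dist z w < ε := by
  obtain ⟨η, hη, h⟩ := exists_pos_forall_norm_add_le_two_mul_sub (E := E) hε (d + 1)
  refine ⟨min (η / 4) 1, by positivity, fun K hK hdK z ⟨hzK, hz⟩ w ⟨hwK, hw⟩ => ?_⟩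
  rw [mem_closedBall_zero_iff] at hz hw
  by_contra! hzw
  rw [dist_eq_norm] at hzw
  have hsum := h _ (by gcongr; exact min_le_right _ _) z w hz hw hzw
  have hmid : (2⁻¹ : ℝ) • (z + w) ∈ K := by
    rw [smul_add]
    exact hK hzK hwK (by norm_num) (by norm_num) (by norm_num)
  have hle : infDist 0 K ≤ 2⁻¹ * ‖z + w‖ := by
    rw [← norm_smul_of_nonneg (by norm_num), ← dist_zero_left]
    exact infDist_le_dist_of_mem hmid
  linarith [min_le_left (η / 4) 1]

end UniformConvexity

section WeakTopology

theorem tendsto_toWeakSpace_iff {ι E : Type*} [SeminormedAddCommGroup E] [NormedSpace ℝ E]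
    {z : ι → E} {l : Filter ι} {u : E} :
    Tendsto (fun i => toWeakSpace ℝ E (z i)) l (𝓝 (toWeakSpace ℝ E u)) ↔
      ∀ f : E →L[ℝ] ℝ, Tendsto (fun i => f (z i)) l (𝓝 (f u)) := by
  have hind : IsInducing fun (v : WeakSpace ℝ E) (f : E →L[ℝ] ℝ) =>
      f ((toWeakSpace ℝ E).symm v) := ⟨rfl⟩
  rw [hind.tendsto_nhds_iff, tendsto_pi_nhds]
  rfl

theorem nonempty_iInter_of_directed_of_dist_lt {X ι : Type*} [PseudoMetricSpace X]
    [CompleteSpace X] [Nonempty ι] {s : ι → Set X} (hdir : Directed (· ⊇ ·) s)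
    (hne : ∀ i, (s i).Nonempty) (hcl : ∀ i, IsClosed (s i))
    (hsmall : ∀ ε > 0, ∃ i, ∀ z ∈ s i, ∀ w ∈ s i, dist z w < ε) : (⋂ i, s i).Nonempty := by
  have hmem (i : ι) : s i ∈ ⨅ i, 𝓟 (s i) := mem_iInf_of_mem i (mem_principal_self _)
  have hneBot : (⨅ i, 𝓟 (s i)).NeBot :=
    iInf_neBot_of_directed'
      (fun i j => (hdir i j).imp fun _ h => ⟨principal_mono.2 h.1, principal_mono.2 h.2⟩)
      fun i => principal_neBot_iff.2 (hne i)
  have hcauchy : Cauchy (⨅ i, 𝓟 (s i)) :=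
    Metric.cauchy_iff.2 ⟨hneBot, fun ε hε => (hsmall ε hε).imp' s fun i hi => ⟨hmem i, hi⟩⟩
  obtain ⟨u, hu⟩ := CompleteSpace.complete hcauchy
  exact ⟨u, mem_iInter.2 fun i => isClosed_iff_clusterPt.1 (hcl i) u
    ((ClusterPt.of_le_nhds hu).mono (le_principal_iff.2 (hmem i)))⟩

/-- The elements of almost minimal norm of the closed convex members of `F` form small sets: as a
member shrinks, its distance to `0` increases to a supremum `d`, which `r` bounds. -/
theorem exists_forall_mem_of_isClosed_of_convex {E : Type*} [SeminormedAddCommGroup E]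
    [NormedSpace ℝ E] [CompleteSpace E] [UniformConvexSpace E] (F : Filter E) [F.NeBot] {r : ℝ}
    (hr : closedBall 0 r ∈ F) :
    ∃ u, ∀ K ∈ F, IsClosed K → Convex ℝ K → u ∈ K := by
  let S : Set (Set E) := {K | K ∈ F ∧ IsClosed K ∧ Convex ℝ K}
  have : Nonempty S := ⟨univ, univ_mem, isClosed_univ, convex_univ⟩
  have hbdd : BddAbove (range fun K : S => infDist 0 (K : Set E)) := by
    refine ⟨r, forall_mem_range.2 fun K => ?_⟩
    obtain ⟨z, hzK, hzr⟩ := F.nonempty_of_mem (inter_mem K.2.1 hr)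
    exact (infDist_le_dist_of_mem hzK).trans (mem_closedBall'.1 hzr)
  let d : ℝ := ⨆ K : S, infDist 0 (K : Set E)
  have : Nonempty (Ioi d) := nonempty_Ioi_subtype
  let B (i : S × Ioi d) : Set E := i.1 ∩ closedBall 0 (i.2 : ℝ)
  have hne (i) : (B i).Nonempty := by
    obtain ⟨z, hz, hzs⟩ :=
      (infDist_lt_iff (F.nonempty_of_mem i.1.2.1)).1 ((le_ciSup hbdd i.1).trans_lt i.2.2)
    exact ⟨z, hz, mem_closedBall'.2 hzs.le⟩
  have hdir : Directed (· ⊇ ·) B := by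
    rintro ⟨⟨K, hK, hKcl, hKcv⟩, s⟩ ⟨⟨L, hL, hLcl, hLcv⟩, t⟩
    exact ⟨⟨⟨K ∩ L, inter_mem hK hL, hKcl.inter hLcl, hKcv.inter hLcv⟩, min s t⟩,
      inter_subset_inter inter_subset_left (closedBall_subset_closedBall (min_le_left s t)),
      inter_subset_inter inter_subset_right (closedBall_subset_closedBall (min_le_right s t))⟩
  have hsmall : ∀ ε > 0, ∃ i, ∀ z ∈ B i, ∀ w ∈ B i, dist z w < ε := by
    intro ε hε
    obtain ⟨δ, hδ, h⟩ := exists_pos_forall_convex_dist_lt_of_infDist (E := E) hε d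
    obtain ⟨K, hK⟩ := exists_lt_of_lt_ciSup (sub_lt_self d hδ)
    exact ⟨⟨K, d + δ, lt_add_of_pos_right d hδ⟩, h K K.2.2.2 hK⟩
  obtain ⟨u, hu⟩ := nonempty_iInter_of_directed_of_dist_lt hdir hne
    (fun i => i.1.2.2.1.inter isClosed_closedBall) hsmall
  exact ⟨u, fun K hKF hKcl hKcv =>
    (mem_iInter.1 hu ⟨⟨K, hKF, hKcl, hKcv⟩, Classical.arbitrary _⟩).1⟩

/-- Closed half-spaces are convex, so an ultrafilter converges weakly to any common point of its
closed convex members. -/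
theorem isCompact_toWeakSpace_image {E : Type*} [SeminormedAddCommGroup E] [NormedSpace ℝ E]
    [CompleteSpace E] [UniformConvexSpace E] {K : Set E} (hb : IsBounded K) (hcl : IsClosed K)
    (hcv : Convex ℝ K) : IsCompact (toWeakSpace ℝ E '' K) := by
  refine isCompact_iff_ultrafilter_le_nhds.2 fun U hU => ?_
  let V : Ultrafilter E := U.map (toWeakSpace ℝ E).symm
  have hK : K ∈ V := by
    filter_upwards [le_principal_iff.1 hU]
    rintro _ ⟨z, hz, rfl⟩
    exact hz
  obtain ⟨r, hr⟩ := hb.subset_closedBall 0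
  obtain ⟨u, hu⟩ := exists_forall_mem_of_isClosed_of_convex (V : Filter E) (mem_of_superset hK hr)
  refine ⟨_, mem_image_of_mem _ (hu K hK hcl hcv), ?_⟩
  suffices ∀ f : E →L[ℝ] ℝ, Tendsto f V (𝓝 (f u)) from
    tendsto_toWeakSpace_iff.2 this
  refine fun f => tendsto_order.2 ⟨fun b hb => ?_, fun b hb => ?_⟩
  · by_contra hV
    have hmem : ∀ᶠ z in V, f z ≤ b := by
      simpa only [not_lt] using Ultrafilter.eventually_not.2 hV
    exact hb.not_ge (hu _ hmem (isClosed_le f.continuous continuous_const)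
      (convex_halfSpace_le f.isLinear b))
  · by_contra hV
    have hmem : ∀ᶠ z in V, b ≤ f z := by
      simpa only [not_lt] using Ultrafilter.eventually_not.2 hV
    exact hb.not_ge (hu _ hmem (isClosed_le continuous_const f.continuous)
      (convex_halfSpace_ge f.isLinear b))

theorem exists_seq_strongDual_separating (𝕜 : Type*) [RCLike 𝕜] {E : Type*} [NormedAddCommGroup E]
    [NormedSpace 𝕜 E] {s : Set E} (hs : IsSeparable s) :
    ∃ g : ℕ → StrongDual 𝕜 E, ∀ v ∈ s, (∀ n, g n v = 0) → v = 0 := by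
  obtain ⟨c, hc, hsc⟩ := hs
  obtain ⟨e, he⟩ := (hc.insert 0).exists_eq_range (insert_nonempty 0 c)
  choose g hg1 hg using fun n => exists_dual_vector'' 𝕜 (e n)
  refine ⟨g, fun v hv h0 => norm_le_zero_iff.1 (le_of_forall_pos_le_add fun ε hε => ?_)⟩
  have hvc : v ∈ closure (range e) := he ▸ closure_mono (subset_insert 0 c) (hsc hv)
  obtain ⟨_, ⟨n, rfl⟩, hvn⟩ := Metric.mem_closure_iff.1 hvc (ε / 2) (half_pos hε)
  have hen : ‖e n‖ ≤ ‖v - e n‖ := by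
    simpa [h0, hg] using (g n).le_of_opNorm_le (hg1 n) (v - e n)
  rw [dist_eq_norm] at hvn
  linarith [norm_sub_norm_le v (e n)]

variable {E : Type*} [NormedAddCommGroup E] [NormedSpace ℝ E] {K : Set (WeakSpace ℝ E)}

theorem isSeqCompact_of_isCompact_of_isSeparable (hK : IsCompact K)
    (hsep : IsSeparable (toWeakSpace ℝ E ⁻¹' K)) : IsSeqCompact K := by
  obtain ⟨g, hg⟩ := exists_seq_strongDual_separating ℝ (hsep.span (R := ℝ))
  have hg_cont (n : ℕ) : Continuous fun z : K => g n ((toWeakSpace ℝ E).symm z) :=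
    (WeakBilin.eval_continuous (topDualPairing ℝ E).flip (g n)).comp continuous_subtype_val
  have hg_sep : Pairwise fun z w : K =>
      ∃ n, g n ((toWeakSpace ℝ E).symm z) ≠ g n ((toWeakSpace ℝ E).symm w) := by
    intro z w hzw
    contrapose! hzw
    refine Subtype.ext ((toWeakSpace ℝ E).symm.injective (sub_eq_zero.1 (hg _ ?_ fun n => ?_)))
    · exact Submodule.sub_mem _ (Submodule.subset_span z.2) (Submodule.subset_span w.2)
    · rw [map_sub, hzw, sub_self]
  have : CompactSpace K := isCompact_iff_compactSpace.1 hK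
  have : MetrizableSpace K :=
    PiNatEmbed.TopologicalSpace.MetrizableSpace.of_countable_separating _ hg_cont hg_sep
  simpa using IsSeqCompact.range (continuous_subtype_val (p := (· ∈ K))).seqContinuous

/-- The easy half of the **Eberlein–Šmulian theorem**: the closed span of a sequence is weakly
closed, which reduces the claim to the separable case. -/
theorem isSeqCompact_of_isCompact_weakSpace (hK : IsCompact K) : IsSeqCompact K := by
  intro x hx
  let Y : Submodule ℝ E :=
    (Submodule.span ℝ (range fun n => (toWeakSpace ℝ E).symm (x n))).topologicalClosure
  have hYcl : IsClosed (toWeakSpace ℝ E '' Y) := by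
    rw [← (Submodule.isClosed_topologicalClosure _).closure_eq, Y.convex.toWeakSpace_closure ℝ]
    exact isClosed_closure
  have hYsep : IsSeparable (Y : Set E) := ((countable_range _).isSeparable.span (R := ℝ)).closure
  have hsep : IsSeparable (toWeakSpace ℝ E ⁻¹' (K ∩ toWeakSpace ℝ E '' Y)) :=
    hYsep.mono fun z hz => by simpa using hz.2
  have hxY (n : ℕ) : x n ∈ toWeakSpace ℝ E '' Y :=
    ⟨_, Submodule.le_topologicalClosure _ (Submodule.subset_span (mem_range_self n)), by simp⟩
  obtain ⟨u, hu, hφ⟩ :=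
    isSeqCompact_of_isCompact_of_isSeparable (hK.inter_right hYcl) hsep fun n => ⟨hx n, hxY n⟩
  exact ⟨u, hu.1, hφ⟩

end WeakTopology

section Opial

variable {E : Type*} [NormedAddCommGroup E] [NormedSpace ℝ E]

/-- **Opial's condition**: the weak limit of a sequence is its strict asymptotic centre. The real
`liminf`s are not junk values, since weakly convergent sequences are bounded. -/
def OpialCondition (E : Type*) [NormedAddCommGroup E] [NormedSpace ℝ E] : Prop :=
  ∀ (z : ℕ → E) (u : E),
    Tendsto (fun n => toWeakSpace ℝ E (z n)) atTop (𝓝 (toWeakSpace ℝ E u)) →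
    ∀ v, v ≠ u → liminf (fun n => ‖z n - u‖) atTop < liminf (fun n => ‖z n - v‖) atTop

namespace OpialCondition

theorem eq_of_tendsto_subseq (hE : OpialCondition E) {x : ℕ → E} {u v : E} {b c : ℝ}
    (hb : Tendsto (fun n => ‖x n - u‖) atTop (𝓝 b)) (hc : Tendsto (fun n => ‖x n - v‖) atTop (𝓝 c))
    {φ ψ : ℕ → ℕ} (hφ : Tendsto φ atTop atTop) (hψ : Tendsto ψ atTop atTop)
    (hu : Tendsto (fun n => toWeakSpace ℝ E (x (φ n))) atTop (𝓝 (toWeakSpace ℝ E u)))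
    (hv : Tendsto (fun n => toWeakSpace ℝ E (x (ψ n))) atTop (𝓝 (toWeakSpace ℝ E v))) :
    u = v := by
  by_contra hne
  have hbc : b < c := by
    rw [← (hb.comp hφ).liminf_eq, ← (hc.comp hφ).liminf_eq]
    exact hE _ u hu v (Ne.symm hne)
  have hcb : c < b := by
    rw [← (hb.comp hψ).liminf_eq, ← (hc.comp hψ).liminf_eq]
    exact hE _ v hv u hne
  exact lt_asymm hbc hcb

/-- **Opial's lemma**. -/
theorem exists_tendsto_of_isSeqCompact (hE : OpialCondition E) {K F : Set E}
    (hK : IsSeqCompact (toWeakSpace ℝ E '' K)) {x : ℕ → E} (hxK : ∀ n, x n ∈ K)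
    (hlim : ∀ p ∈ F, ∃ c, Tendsto (fun n => ‖x n - p‖) atTop (𝓝 c))
    (hF : ∀ u ∈ K, ∀ φ : ℕ → ℕ, Tendsto φ atTop atTop →
      Tendsto (fun n => toWeakSpace ℝ E (x (φ n))) atTop (𝓝 (toWeakSpace ℝ E u)) → u ∈ F) :
    ∃ u ∈ F, Tendsto (fun n => toWeakSpace ℝ E (x n)) atTop (𝓝 (toWeakSpace ℝ E u)) := by
  have hsub {ns : ℕ → ℕ} (hns : Tendsto ns atTop atTop) :
      ∃ u ∈ F, ∃ ms : ℕ → ℕ, Tendsto (ns ∘ ms) atTop atTop ∧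
        Tendsto (fun n => toWeakSpace ℝ E (x (ns (ms n)))) atTop (𝓝 (toWeakSpace ℝ E u)) := by
    obtain ⟨_, ⟨u, huK, rfl⟩, ms, hms, hu⟩ := hK fun n => mem_image_of_mem _ (hxK (ns n))
    have hnm := hns.comp hms.tendsto_atTop
    exact ⟨u, hF u huK _ hnm hu, ms, hnm, hu⟩
  obtain ⟨u, huF, φ, hφ, hu⟩ := hsub tendsto_id
  refine ⟨u, huF, tendsto_of_subseq_tendsto fun ns hns => ?_⟩
  obtain ⟨v, hvF, ms, hms, hv⟩ := hsub hns
  obtain ⟨b, hb⟩ := hlim u huF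
  obtain ⟨c, hc⟩ := hlim v hvF
  obtain rfl : u = v := hE.eq_of_tendsto_subseq hb hc hφ hms hu hv
  exact ⟨ms, hv⟩

end OpialCondition

end Opial

section Nonspreading

variable {E : Type*} [SeminormedAddCommGroup E] {T : E → E} {C : Set E}

/-- `p` is an attractive point of `T` on `C`, in the sense of Takahashi and Takeuchi; `p` need be
neither a fixed point of `T` nor in `C`. The distances of an Ishikawa iteration to such a point
decrease. -/
def IsAttractivePt (T : E → E) (C : Set E) (p : E) : Prop :=
  ∀ z ∈ C, ‖T z - p‖ ≤ ‖z - p‖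

/-- `T` is nonspreading on `C`, in the sense of Kohsaka and Takahashi. A self-mapping of `C` is
represented by a map of the whole space, whose values outside `C` are arbitrary. -/
def NonspreadingOn (T : E → E) (C : Set E) : Prop :=
  ∀ x ∈ C, ∀ y ∈ C, 2 * ‖T x - T y‖ ^ 2 ≤ ‖T x - y‖ ^ 2 + ‖T y - x‖ ^ 2

namespace NonspreadingOn

theorem isAttractivePt (hT : NonspreadingOn T C) {p : E} (hp : p ∈ C) (hTp : T p = p) :
    IsAttractivePt T C p := by
  intro z hz
  have h := hT z hz p hp
  rw [hTp, norm_sub_rev p z] at h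
  exact (sq_le_sq₀ (norm_nonneg _) (norm_nonneg _)).1 (by linarith)

theorem norm_sub_map_le (hT : NonspreadingOn T C) {z u : E} (hz : z ∈ C) (hu : u ∈ C) :
    ‖z - T u‖ ≤ ‖z - u‖ + 5 * ‖z - T z‖ := by
  set r := ‖z - T z‖
  set b := ‖z - u‖
  set c := ‖T z - T u‖
  have hr : 0 ≤ r := norm_nonneg _
  have hb : 0 ≤ b := norm_nonneg _
  have hzTu : ‖z - T u‖ ≤ r + c := norm_sub_le_norm_sub_add_norm_sub _ _ _
  have hTzu : ‖T z - u‖ ≤ r + b :=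
    (norm_sub_le_norm_sub_add_norm_sub _ z _).trans_eq (by rw [norm_sub_rev (T z) z])
  have hsq : 2 * c ^ 2 ≤ (r + b) ^ 2 + (r + c) ^ 2 :=
    calc
      2 * c ^ 2 ≤ ‖T z - u‖ ^ 2 + ‖z - T u‖ ^ 2 := norm_sub_rev z (T u) ▸ hT z hz u hu
      _ ≤ (r + b) ^ 2 + (r + c) ^ 2 := by gcongr
  have hcr : (c - r) ^ 2 ≤ (3 * r + b) ^ 2 := by nlinarith [mul_nonneg hr hb]
  linarith [abs_le_of_sq_le_sq' hcr (by positivity)]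

/-- Demiclosedness of `id - T` at `0`. -/
theorem map_eq_of_tendsto {E : Type*} [NormedAddCommGroup E] [NormedSpace ℝ E] {T : E → E}
    {C : Set E} (hE : OpialCondition E) (hT : NonspreadingOn T C) {z : ℕ → E} {u : E}
    (hzC : ∀ n, z n ∈ C) (hzb : IsBounded (range z)) (hu : u ∈ C)
    (hzu : Tendsto (fun n => toWeakSpace ℝ E (z n)) atTop (𝓝 (toWeakSpace ℝ E u)))
    (hres : Tendsto (fun n => ‖z n - T (z n)‖) atTop (𝓝 0)) : T u = u := by
  by_contra hne
  obtain ⟨c, hc, hcT⟩ := exists_between (hE z u hzu _ hne)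
  obtain ⟨b, hb, hbc⟩ := exists_between hc
  obtain ⟨r, hr⟩ := hzb.subset_closedBall u
  have hbdd : IsBoundedUnder (· ≤ ·) atTop fun n => ‖z n - u‖ :=
    isBoundedUnder_of ⟨r, fun n => mem_closedBall_iff_norm.1 (hr (mem_range_self n))⟩
  have hnear : ∃ᶠ n in atTop, ‖z n - u‖ < b :=
    frequently_lt_of_liminf_lt hbdd.isCoboundedUnder_ge hb
  have hfar : ∀ᶠ n in atTop, c < ‖z n - T u‖ :=
    eventually_lt_of_lt_liminf hcT (isBoundedUnder_of ⟨0, fun n => norm_nonneg _⟩)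
  have hsmall : ∀ᶠ n in atTop, ‖z n - T (z n)‖ < (c - b) / 5 :=
    hres.eventually_lt_const (by linarith)
  obtain ⟨n, hn_near, hn_far, hn_small⟩ := (hnear.and_eventually (hfar.and hsmall)).exists
  linarith [hT.norm_sub_map_le (hzC n) hu]

end NonspreadingOn

end Nonspreading

section Ishikawa

/-- `x` is an Ishikawa iteration of `T`, with auxiliary sequence `y` and weights `lam`, `gam`.
The indices start at `0`, and the starting point `x 0` is arbitrary. -/
structure IsIshikawaIteration {E : Type*} [SeminormedAddCommGroup E] [NormedSpace ℝ E]
    (T : E → E) (lam gam : ℕ → ℝ) (x y : ℕ → E) : Prop where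
  lam_mem : ∀ n, lam n ∈ Icc (0 : ℝ) 1
  gam_mem : ∀ n, gam n ∈ Icc (0 : ℝ) 1
  aux_eq : ∀ n, y n = (1 - lam n) • x n + lam n • T (x n)
  succ_eq : ∀ n, x (n + 1) = (1 - gam n) • x n + gam n • T (y n)

namespace IsIshikawaIteration

variable {E : Type*} [SeminormedAddCommGroup E] [NormedSpace ℝ E] {T : E → E} {C : Set E}
  {lam gam : ℕ → ℝ} {x y : ℕ → E} {p : E} {n : ℕ}

theorem aux_mem (h : IsIshikawaIteration T lam gam x y) (hC : Convex ℝ C) (hT : MapsTo T C C)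
    (hx : x n ∈ C) : y n ∈ C := by
  rw [h.aux_eq]
  exact hC hx (hT hx) (sub_nonneg.2 (h.lam_mem n).2) (h.lam_mem n).1 (sub_add_cancel _ _)

theorem mem (h : IsIshikawaIteration T lam gam x y) (hC : Convex ℝ C) (hT : MapsTo T C C)
    (hx : x 0 ∈ C) (n : ℕ) : x n ∈ C := by
  induction n with
  | zero => exact hx
  | succ n ih =>
    rw [h.succ_eq]
    exact hC ih (hT (h.aux_mem hC hT ih)) (sub_nonneg.2 (h.gam_mem n).2) (h.gam_mem n).1
      (sub_add_cancel _ _)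

theorem norm_aux_sub_le (h : IsIshikawaIteration T lam gam x y) (hp : IsAttractivePt T C p)
    (hx : x n ∈ C) : ‖y n - p‖ ≤ ‖x n - p‖ := by
  rw [← mem_closedBall_iff_norm]
  exact h.aux_eq n ▸ convex_closedBall p _ (mem_closedBall_iff_norm.2 le_rfl)
    (mem_closedBall_iff_norm.2 (hp _ hx)) (sub_nonneg.2 (h.lam_mem n).2) (h.lam_mem n).1
    (sub_add_cancel _ _)

theorem mul_defect_le (h : IsIshikawaIteration T lam gam x y) (hp : IsAttractivePt T C p)
    (hy : y n ∈ C) :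
    gam n * (‖x n - p‖ - ‖y n - p‖) ≤ ‖x n - p‖ - ‖x (n + 1) - p‖ := by
  obtain ⟨hg0, hg1⟩ := h.gam_mem n
  have hnext : ‖x (n + 1) - p‖ ≤ (1 - gam n) * ‖x n - p‖ + gam n * ‖T (y n) - p‖ := by
    simpa [h.succ_eq, dist_eq_norm] using (convexOn_dist p convex_univ).2 (mem_univ (x n))
      (mem_univ (T (y n))) (sub_nonneg.2 hg1) hg0 (sub_add_cancel _ _)
  linarith [mul_le_mul_of_nonneg_left (hp _ hy) hg0]

theorem antitone_norm_sub (h : IsIshikawaIteration T lam gam x y) (hp : IsAttractivePt T C p)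
    (hx : ∀ n, x n ∈ C) (hy : ∀ n, y n ∈ C) : Antitone fun n => ‖x n - p‖ :=
  antitone_nat_of_succ_le fun n => sub_nonneg.1 <|
    (mul_nonneg (h.gam_mem n).1 (sub_nonneg.2 (h.norm_aux_sub_le hp (hx n)))).trans
      (h.mul_defect_le hp (hy n))

theorem exists_tendsto_norm_sub (h : IsIshikawaIteration T lam gam x y)
    (hp : IsAttractivePt T C p) (hx : ∀ n, x n ∈ C) (hy : ∀ n, y n ∈ C) :
    ∃ c, Tendsto (fun n => ‖x n - p‖) atTop (𝓝 c) :=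
  ⟨_, tendsto_atTop_ciInf (h.antitone_norm_sub hp hx hy)
    ⟨0, forall_mem_range.2 fun _ => norm_nonneg _⟩⟩

theorem tendsto_defect (h : IsIshikawaIteration T lam gam x y) (hp : IsAttractivePt T C p)
    (hx : ∀ n, x n ∈ C) (hy : ∀ n, y n ∈ C) {a : ℝ} (ha : 0 < a) (hgam : ∀ n, a ≤ gam n) :
    Tendsto (fun n => ‖x n - p‖ - ‖y n - p‖) atTop (𝓝 0) := by
  obtain ⟨c, hc⟩ := h.exists_tendsto_norm_sub hp hx hy
  have hdecr : Tendsto (fun n => (‖x n - p‖ - ‖x (n + 1) - p‖) / a) atTop (𝓝 0) := by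
    simpa using (hc.sub (hc.comp (tendsto_add_atTop_nat 1))).div_const a
  have hnonneg (n : ℕ) : 0 ≤ ‖x n - p‖ - ‖y n - p‖ := sub_nonneg.2 (h.norm_aux_sub_le hp (hx n))
  refine squeeze_zero hnonneg (fun n => (le_div_iff₀' ha).2 ?_) hdecr
  exact (mul_le_mul_of_nonneg_right (hgam n) (hnonneg n)).trans (h.mul_defect_le hp (hy n))

variable [UniformConvexSpace E]

theorem exists_pos_forall_mul_le_defect (h : IsIshikawaIteration T lam gam x y)
    (hp : IsAttractivePt T C p) (hx : ∀ n, x n ∈ C) (hy : ∀ n, y n ∈ C) {ε : ℝ} (hε : 0 < ε) :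
    ∃ δ > 0, ∀ n, ε ≤ ‖x n - T (x n)‖ →
      lam n * (1 - lam n) * δ ≤ ‖x n - p‖ - ‖y n - p‖ := by
  obtain ⟨δ, hδ, hconv⟩ := exists_pos_forall_norm_convexCombination_le (E := E) hε ‖x 0 - p‖
  refine ⟨δ, hδ, fun n hn => le_sub_comm.1 ?_⟩
  have haux : y n - p = (1 - lam n) • (x n - p) + lam n • (T (x n) - p) := by
    rw [h.aux_eq]; module
  rw [haux]
  exact hconv _ (h.antitone_norm_sub hp hx hy n.zero_le) _ _ le_rfl (hp _ (hx n))
    (by rwa [sub_sub_sub_cancel_right]) _ (h.lam_mem n)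

theorem tendsto_norm_sub_map (h : IsIshikawaIteration T lam gam x y)
    (hp : IsAttractivePt T C p) (hx : ∀ n, x n ∈ C) (hy : ∀ n, y n ∈ C)
    {a : ℝ} (ha : 0 < a) (hgam : ∀ n, a ≤ gam n)
    (hliminf : 0 < liminf (fun n => lam n * (1 - lam n)) atTop) :
    Tendsto (fun n => ‖x n - T (x n)‖) atTop (𝓝 0) := by
  refine tendsto_order.2 ⟨fun b hb => Eventually.of_forall fun n => hb.trans_le (norm_nonneg _),
    fun ε hε => ?_⟩
  obtain ⟨κ, hκ, hκlim⟩ := exists_between hliminf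
  obtain ⟨δ, hδ, hdefect⟩ := h.exists_pos_forall_mul_le_defect hp hx hy hε
  have hlam : ∀ᶠ n in atTop, κ < lam n * (1 - lam n) :=
    eventually_lt_of_lt_liminf hκlim (isBoundedUnder_of
      ⟨0, fun n => mul_nonneg (h.lam_mem n).1 (sub_nonneg.2 (h.lam_mem n).2)⟩)
  have hsmall : ∀ᶠ n in atTop, ‖x n - p‖ - ‖y n - p‖ < κ * δ :=
    (h.tendsto_defect hp hx hy ha hgam).eventually_lt_const (mul_pos hκ hδ)
  filter_upwards [hlam, hsmall] with n hn_lam hn_small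
  by_contra! hn
  linarith [hdefect n hn, mul_lt_mul_of_pos_right hn_lam hδ]

end IsIshikawaIteration

end Ishikawa

/-- Let `E` be a uniformly convex real Banach space satisfying Opial's
condition, `C` a nonempty closed convex subset of `E`, and `T` a nonspreading self-mapping of
`C` (i.e. `2‖Tx−Ty‖² ≤ ‖Tx−y‖² + ‖Ty−x‖²`) with a fixed point. Then the Ishikawa iteration
(with `λₙ ∈ [0,1]`, `γₙ ∈ [a,1]`, `0 < a ≤ 1`, `liminf λₙ(1−λₙ) > 0`) converges weakly to a
fixed point of `T`. -/
theorem ishikawa_nonspreading_weak_convergence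
    {E : Type*} [NormedAddCommGroup E] [NormedSpace ℝ E] [CompleteSpace E]
    [UniformConvexSpace E]
    (hOpial : ∀ (z : ℕ → E) (u : E),
      (∀ f : E →L[ℝ] ℝ, Tendsto (fun n => f (z n)) atTop (𝓝 (f u))) →
      ∀ v : E, v ≠ u →
        Filter.liminf (fun n => ‖z n - u‖) atTop < Filter.liminf (fun n => ‖z n - v‖) atTop)
    (C : Set E) (hCne : C.Nonempty) (hCcl : IsClosed C) (hCcv : Convex ℝ C)
    (T : E → E) (hTself : Set.MapsTo T C C)
    (hnonspread : ∀ x ∈ C, ∀ y ∈ C,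
      2 * ‖T x - T y‖ ^ 2 ≤ ‖T x - y‖ ^ 2 + ‖T y - x‖ ^ 2)
    (hF : ∃ p ∈ C, T p = p)
    (a : ℝ) (ha0 : 0 < a) (ha1 : a ≤ 1)
    (lam gam : ℕ → ℝ)
    (hlam : ∀ n, lam n ∈ Set.Icc (0 : ℝ) 1) (hgam : ∀ n, gam n ∈ Set.Icc a 1)
    (hliminf : 0 < Filter.liminf (fun n => lam n * (1 - lam n)) atTop)
    (x y : ℕ → E) (x₀ : E) (hx₀ : x₀ ∈ C) (hinit : x 0 = x₀)
    (hy : ∀ n, y n = (1 - lam n) • x n + lam n • T (x n))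
    (hxs : ∀ n, x (n + 1) = (1 - gam n) • x n + gam n • T (y n)) :
    ∃ p ∈ C, T p = p ∧
      ∀ f : E →L[ℝ] ℝ, Tendsto (fun n => f (x n)) atTop (𝓝 (f p)) := by
  have hE : OpialCondition E := fun z u hzu => hOpial z u (tendsto_toWeakSpace_iff.1 hzu)
  have hT : NonspreadingOn T C := hnonspread
  have hI : IsIshikawaIteration T lam gam x y :=
    ⟨hlam, fun n => ⟨ha0.le.trans (hgam n).1, (hgam n).2⟩, hy, hxs⟩
  have hxC : ∀ n, x n ∈ C := hI.mem hCcv hTself (hinit ▸ hx₀)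
  have hyC (n : ℕ) : y n ∈ C := hI.aux_mem hCcv hTself (hxC n)
  obtain ⟨p, hp, hTp⟩ := hF
  have hpT := hT.isAttractivePt hp hTp
  have hres := hI.tendsto_norm_sub_map hpT hxC hyC ha0 (fun n => (hgam n).1) hliminf
  let K := C ∩ closedBall p ‖x 0 - p‖
  have hKb : IsBounded K := isBounded_closedBall.subset inter_subset_right
  have hxK (n : ℕ) : x n ∈ K :=
    ⟨hxC n, mem_closedBall_iff_norm.2 (hI.antitone_norm_sub hpT hxC hyC n.zero_le)⟩
  have hK : IsSeqCompact (toWeakSpace ℝ E '' K) := isSeqCompact_of_isCompact_weakSpace <|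
    isCompact_toWeakSpace_image hKb (hCcl.inter isClosed_closedBall)
      (hCcv.inter (convex_closedBall _ _))
  obtain ⟨q, ⟨hqC, hTq⟩, hq⟩ := hE.exists_tendsto_of_isSeqCompact
    (F := {q | q ∈ C ∧ T q = q}) hK hxK
    (fun q hq => hI.exists_tendsto_norm_sub (hT.isAttractivePt hq.1 hq.2) hxC hyC)
    fun u hu φ hφ hxu => ⟨hu.1, hT.map_eq_of_tendsto hE (fun n => hxC (φ n))
      (hKb.subset (range_subset_iff.2 fun n => hxK (φ n))) hu.1 hxu (hres.comp hφ)⟩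
  exact ⟨q, hqC, hTq, tendsto_toWeakSpace_iff.1 hq⟩
end

section
/- Let E be a real Banach space satisfying Opial's condition, C a nonempty closed convex subset of E, and T an (α,β,γ,δ)-symmetric generalized hybrid self-mapping of C satisfying α+2β+γ ≥ 0, α+β > 0, β ≤ 0 and δ ≥ 0. If {xₙ} is a bounded sequence in C with ‖xₙ − Txₙ‖ → 0, then for every u ∈ C and every n, ‖Txₙ − Tu‖² ≤ ‖xₙ − u‖² − (2β/(α+β))‖xₙ − Txₙ‖² − (2β/(α+β))(‖xₙ − u‖ + ‖Txₙ − Tu‖)‖Txₙ − xₙ‖. -/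
open Filter Topology

/-!
For two points `x, y` and their images, the mixed distances in the symmetric generalized hybrid
condition are the diagonals of the quadrilateral `x, y, T y, T x`. The triangle inequality through
the side `x, T x` bounds the diagonals from above, and since `β ≤ 0` this bounds their contribution
to the condition from below. What remains is an estimate of `(α + β) d(T x, T y)²` in terms of
`d(x, y)` and `d(x, T x)`.
-/

section PseudoMetric

variable {X : Type*} [PseudoMetricSpace X]

theorem dist_diagonal_sq_add_sq_le (x x' y y' : X) :
    dist x y' ^ 2 + dist x' y ^ 2 ≤
      dist x y ^ 2 + dist x' y' ^ 2 + 2 * dist x x' ^ 2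
        + 2 * (dist x y + dist x' y') * dist x x' := by
  have first_diagonal : dist x y' ≤ dist x x' + dist x' y' := dist_triangle x x' y'
  have second_diagonal : dist x' y ≤ dist x x' + dist x y := dist_triangle_left x' y x
  calc dist x y' ^ 2 + dist x' y ^ 2
      ≤ (dist x x' + dist x' y') ^ 2 + (dist x x' + dist x y) ^ 2 := by gcongr
    _ = _ := by ring

/-- The `(α, β, γ, δ)`-symmetric generalized hybrid condition for `T`, with norms of differences
replaced by distances so that it makes sense in a pseudometric space. A self-mapping of `C` is
encoded as a map `T` on the whole space, with the condition imposed only at points of `C`. -/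
def IsSymmGenHybridOn (α β γ δ : ℝ) (T : X → X) (C : Set X) : Prop :=
  ∀ x ∈ C, ∀ y ∈ C,
    α * dist (T x) (T y) ^ 2 + β * (dist x (T y) ^ 2 + dist (T x) y ^ 2) + γ * dist x y ^ 2
      + δ * (dist x (T x) ^ 2 + dist y (T y) ^ 2) ≤ 0

namespace IsSymmGenHybridOn

variable {α β γ δ : ℝ} {T : X → X} {C : Set X} {x y : X}

theorem mul_dist_sq_le (hT : IsSymmGenHybridOn α β γ δ T C) (hαβγ : 0 ≤ α + 2 * β + γ)
    (hβ : β ≤ 0) (hδ : 0 ≤ δ) (hx : x ∈ C) (hy : y ∈ C) :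
    (α + β) * dist (T x) (T y) ^ 2 ≤
      (α + β) * dist x y ^ 2 - 2 * β * dist x (T x) ^ 2
        - 2 * β * (dist x y + dist (T x) (T y)) * dist x (T x) := by
  have diagonals :=
    mul_le_mul_of_nonpos_left (dist_diagonal_sq_add_sq_le x (T x) y (T y)) hβ
  have displacements : 0 ≤ δ * (dist x (T x) ^ 2 + dist y (T y) ^ 2) := by positivity
  have coefficients : 0 ≤ (α + 2 * β + γ) * dist x y ^ 2 := by positivity
  linarith [hT x hx y hy]

end IsSymmGenHybridOn

theorem symm_gen_hybrid_key_inequality_general {α β γ δ : ℝ} {T : X → X} {C : Set X} {x y : X}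
    (hT : IsSymmGenHybridOn α β γ δ T C) (hαβγ : 0 ≤ α + 2 * β + γ) (hαβ : 0 < α + β)
    (hβ : β ≤ 0) (hδ : 0 ≤ δ) (hx : x ∈ C) (hy : y ∈ C) :
    dist (T x) (T y) ^ 2 ≤
      dist x y ^ 2 - (2 * β / (α + β)) * dist x (T x) ^ 2
        - (2 * β / (α + β)) * (dist x y + dist (T x) (T y)) * dist x (T x) := by
  refine le_of_mul_le_mul_left ?_ hαβ
  calc (α + β) * dist (T x) (T y) ^ 2
      ≤ (α + β) * dist x y ^ 2 - 2 * β * dist x (T x) ^ 2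
          - 2 * β * (dist x y + dist (T x) (T y)) * dist x (T x) :=
        hT.mul_dist_sq_le hαβγ hβ hδ hx hy
    _ = _ := by field_simp

end PseudoMetric

/-- Let `E` be a real Banach space satisfying Opial's condition, `C` a
nonempty closed convex subset of `E`, and `T` an `(α,β,γ,δ)`-symmetric generalized hybrid
self-mapping of `C` with `α+2β+γ ≥ 0`, `α+β > 0`, `β ≤ 0`, `δ ≥ 0`. If `{xₙ}` is a bounded
sequence in `C` with `‖xₙ − Txₙ‖ → 0`, then for every `u ∈ C` and every `n`,
`‖Txₙ − Tu‖² ≤ ‖xₙ − u‖² − (2β/(α+β))‖xₙ − Txₙ‖² − (2β/(α+β))(‖xₙ − u‖ + ‖Txₙ − Tu‖)‖Txₙ − xₙ‖`. -/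
theorem symm_gen_hybrid_key_inequality
    {E : Type*} [NormedAddCommGroup E] [NormedSpace ℝ E] [CompleteSpace E]
    (hOpial : ∀ (z : ℕ → E) (u : E),
      (∀ f : E →L[ℝ] ℝ, Tendsto (fun n => f (z n)) atTop (𝓝 (f u))) →
      ∀ v : E, v ≠ u →
        Filter.liminf (fun n => ‖z n - u‖) atTop < Filter.liminf (fun n => ‖z n - v‖) atTop)
    (C : Set E) (hCne : C.Nonempty) (hCcl : IsClosed C) (hCcv : Convex ℝ C)
    (T : E → E) (hTself : Set.MapsTo T C C)
    (α β γ δ : ℝ)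
    (hhyb : ∀ x ∈ C, ∀ y ∈ C,
      α * ‖T x - T y‖ ^ 2 + β * (‖x - T y‖ ^ 2 + ‖T x - y‖ ^ 2) + γ * ‖x - y‖ ^ 2
        + δ * (‖x - T x‖ ^ 2 + ‖y - T y‖ ^ 2) ≤ 0)
    (h1 : α + 2 * β + γ ≥ 0) (h2 : α + β > 0) (h3 : β ≤ 0) (h4 : δ ≥ 0)
    (x : ℕ → E) (hx : ∀ n, x n ∈ C)
    (hbdd : Bornology.IsBounded (Set.range x))
    (hAF : Tendsto (fun n => ‖x n - T (x n)‖) atTop (𝓝 0)) :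
    ∀ u ∈ C, ∀ n : ℕ,
      ‖T (x n) - T u‖ ^ 2 ≤
        ‖x n - u‖ ^ 2 - (2 * β / (α + β)) * ‖x n - T (x n)‖ ^ 2
          - (2 * β / (α + β)) * (‖x n - u‖ + ‖T (x n) - T u‖) * ‖T (x n) - x n‖ := by
  intro u hu n
  have hT : IsSymmGenHybridOn α β γ δ T C := by
    simpa only [IsSymmGenHybridOn, dist_eq_norm] using hhyb
  simpa only [dist_eq_norm, norm_sub_rev (T (x n)) (x n)] using
    symm_gen_hybrid_key_inequality_general hT h1 h2 h3 h4 (hx n) hu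
end
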